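/- For the uniform scale model on ℝ₊ⁿ with P(·|θ) the law of n i.i.d. Uniform[0,θ) variables for θ > 0 and P(·|0) the law of n i.i.d. unit-scale exponentials, and prior ν(dθ) = dθ/θ on [0, ∞): there do not exist a non-empty measurable C ⊆ [0,∞) with ν(Cᶜ) > 0 and measurable A ⊆ ℝ₊ⁿ such that P(Aᶜ|θ) = 0 for all θ ∈ C and P(A|θ) = 0 for ν-almost all θ ∈ Cᶜ. -/

import Mathlib

open MeasureTheory ProbabilityTheory

/-!
No two laws of the uniform scale model are mutually singular: every marginal charges all
Lebesgue-positive subsets of some interval `[0, t)`, and for finite products mutual singularity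
can only come from a pair of mutually singular factors. A set `A` carrying `P(·|θ₁)` for a point
`θ₁ ∈ C` therefore cannot be null for `P(·|θ)`, whatever `θ` is, so the exceptional set of
parameters contains all of `[0, ∞) \ C`.
-/

section Product

variable {ι : Type*} {X : ι → Type*} [∀ i, MeasurableSpace (X i)] {μ ν : ∀ i, Measure (X i)}

theorem tprod_absolutelyContinuous [∀ i, SigmaFinite (ν i)] (h : ∀ i, μ i ≪ ν i) (l : List ι) :
    Measure.tprod l μ ≪ Measure.tprod l ν := by
  induction l with
  | nil => rfl
  | cons i l ih =>
    rw [Measure.tprod_cons, Measure.tprod_cons]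
    exact (h i).prod ih

theorem pi_absolutelyContinuous [Fintype ι] [∀ i, SigmaFinite (μ i)] [∀ i, SigmaFinite (ν i)]
    (h : ∀ i, μ i ≪ ν i) : Measure.pi μ ≪ Measure.pi ν := by
  classical
  let := Fintype.toEncodable ι
  rw [← Measure.pi'_eq_pi μ, ← Measure.pi'_eq_pi ν]
  exact (tprod_absolutelyContinuous h _).map (measurable_tProd_elim' _)

theorem not_mutuallySingular_pi [Fintype ι] [∀ i, SigmaFinite (μ i)] [∀ i, SigmaFinite (ν i)]
    (h : ∀ i, ¬ μ i ⟂ₘ ν i) : ¬ Measure.pi μ ⟂ₘ Measure.pi ν := by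
  -- The product of the absolutely continuous parts is a nonzero measure below both products.
  let ρ i := (ν i).withDensity ((μ i).rnDeriv (ν i))
  have hρ_ne (i : ι) : ρ i ≠ 0 := fun hi =>
    h i <| (Measure.rnDeriv_eq_zero _ _).1 <|
      (withDensity_eq_zero_iff (Measure.measurable_rnDeriv _ _).aemeasurable).1 hi
  have hρμ : Measure.pi ρ ≪ Measure.pi μ :=
    pi_absolutelyContinuous fun i => (Measure.withDensity_rnDeriv_le _ _).absolutelyContinuous
  have hρν : Measure.pi ρ ≪ Measure.pi ν :=
    pi_absolutelyContinuous fun i => withDensity_absolutelyContinuous _ _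
  intro hsing
  have hρ_zero : Measure.pi ρ = 0 := (Measure.MutuallySingular.self_iff _).1 (hsing.mono_ac hρμ hρν)
  rw [← Measure.measure_univ_eq_zero, Measure.pi_univ, Finset.prod_eq_zero_iff] at hρ_zero
  obtain ⟨i, -, hi⟩ := hρ_zero
  exact hρ_ne i (Measure.measure_univ_eq_zero.1 hi)

end Product

theorem not_mutuallySingular_of_volume_restrict_Ico_absolutelyContinuous {μ ν : Measure ℝ}
    {a s t : ℝ} (has : a < s) (hat : a < t) (hμ : volume.restrict (Set.Ico a s) ≪ μ)
    (hν : volume.restrict (Set.Ico a t) ≪ ν) : ¬ μ ⟂ₘ ν := by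
  have hrestrict {u : ℝ} (hu : min s t ≤ u) :
      volume.restrict (Set.Ico a (min s t)) ≪ volume.restrict (Set.Ico a u) :=
    (Measure.restrict_mono_set _ (Set.Ico_subset_Ico_right hu)).absolutelyContinuous
  intro hsing
  have hzero : volume.restrict (Set.Ico a (min s t)) = 0 :=
    (Measure.MutuallySingular.self_iff _).1 <|
      hsing.mono_ac ((hrestrict (min_le_left s t)).trans hμ)
        ((hrestrict (min_le_right s t)).trans hν)
  rw [Measure.restrict_eq_zero, Real.volume_Ico, ENNReal.ofReal_eq_zero, sub_nonpos] at hzero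
  exact hzero.not_gt (lt_min has hat)

theorem volume_restrict_Ici_absolutelyContinuous_expMeasure {r : ℝ} (hr : 0 < r) :
    volume.restrict (Set.Ici 0) ≪ expMeasure r := by
  have hpdf : ∀ᵐ x ∂volume.restrict (Set.Ici (0 : ℝ)), exponentialPDF r x ≠ 0 := by
    filter_upwards [ae_restrict_mem measurableSet_Ici] with x hx
    rw [exponentialPDF_of_nonneg hx]
    exact (ENNReal.ofReal_pos.2 (by positivity)).ne'
  have hmeas : Measurable (exponentialPDF r) := (measurable_exponentialPDFReal r).ennreal_ofReal
  have hle : (volume.restrict (Set.Ici 0)).withDensity (exponentialPDF r) ≤ expMeasure r :=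
    (restrict_withDensity measurableSet_Ici _).ge.trans Measure.restrict_le_self
  exact (withDensity_absolutelyContinuous' hmeas.aemeasurable hpdf).trans hle.absolutelyContinuous

/-- The law of a single observation in the uniform scale model: `Uniform[0, θ)` for `θ > 0` and
the unit-rate exponential at `θ = 0`. To have a law for every real `θ`, negative parameters are
given the exponential law as well. -/
noncomputable def uniformScaleLaw (θ : ℝ) : Measure ℝ :=
  if 0 < θ then (ENNReal.ofReal θ)⁻¹ • volume.restrict (Set.Ico 0 θ) else expMeasure 1

namespace uniformScaleLaw

theorem of_pos {θ : ℝ} (hθ : 0 < θ) :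
    uniformScaleLaw θ = (ENNReal.ofReal θ)⁻¹ • volume.restrict (Set.Ico 0 θ) :=
  if_pos hθ

theorem of_nonpos {θ : ℝ} (hθ : θ ≤ 0) : uniformScaleLaw θ = expMeasure 1 :=
  if_neg hθ.not_gt

instance isProbabilityMeasure (θ : ℝ) : IsProbabilityMeasure (uniformScaleLaw θ) := by
  rcases lt_or_ge 0 θ with hθ | hθ
  · rw [of_pos hθ]
    constructor
    rw [Measure.smul_apply, smul_eq_mul, Measure.restrict_apply_univ, Real.volume_Ico, sub_zero]
    exact ENNReal.inv_mul_cancel (ENNReal.ofReal_pos.2 hθ).ne' ENNReal.ofReal_ne_top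
  · rw [of_nonpos hθ]
    exact isProbabilityMeasure_expMeasure one_pos

theorem exists_volume_restrict_Ico_absolutelyContinuous (θ : ℝ) :
    ∃ t > 0, volume.restrict (Set.Ico 0 t) ≪ uniformScaleLaw θ := by
  rcases lt_or_ge 0 θ with hθ | hθ
  · refine ⟨θ, hθ, ?_⟩
    rw [of_pos hθ]
    exact Measure.absolutelyContinuous_smul (ENNReal.inv_ne_zero.2 ENNReal.ofReal_ne_top)
  · refine ⟨1, one_pos, ?_⟩
    rw [of_nonpos hθ]
    exact (Measure.restrict_mono_set _ Set.Ico_subset_Ici_self).absolutelyContinuous.trans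
      (volume_restrict_Ici_absolutelyContinuous_expMeasure one_pos)

theorem not_mutuallySingular (θ η : ℝ) : ¬ uniformScaleLaw θ ⟂ₘ uniformScaleLaw η := by
  obtain ⟨s, hs, hθ⟩ := exists_volume_restrict_Ico_absolutelyContinuous θ
  obtain ⟨t, ht, hη⟩ := exists_volume_restrict_Ico_absolutelyContinuous η
  exact not_mutuallySingular_of_volume_restrict_Ico_absolutelyContinuous hs ht hθ hη

end uniformScaleLaw

theorem measure_eq_zero_of_ae_not_mutuallySingular {Θ X : Type*} [MeasurableSpace Θ]
    [MeasurableSpace X] {P : Θ → Measure X} {ν : Measure Θ} {ρ : Measure X} {D : Set Θ}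
    {A : Set X} (hP : ∀ᵐ θ ∂ν, ¬ P θ ⟂ₘ ρ) (hρ : ρ Aᶜ = 0)
    (hA : ∀ᵐ θ ∂ν, θ ∈ D → P θ A = 0) : ν D = 0 := by
  rw [measure_eq_zero_iff_ae_notMem]
  filter_upwards [hP, hA] with θ hPθ hAθ hθ
  exact hPθ (.mk (hAθ hθ) hρ (Set.union_compl_self A).ge)

theorem stmt_16_general {ι : Type*} [Fintype ι] (P : ℝ → Measure (ι → ℝ))
    (hPpos : ∀ θ : ℝ, 0 < θ →
      P θ = Measure.pi (fun _ : ι => (ENNReal.ofReal θ)⁻¹ • (volume.restrict (Set.Ico 0 θ))))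
    (hPzero : ∀ θ : ℝ, θ ≤ 0 → P θ = Measure.pi (fun _ : ι => expMeasure 1))
    (ν : Measure ℝ) :
    ¬ ∃ (C : Set ℝ) (A : Set (ι → ℝ)),
      C.Nonempty ∧ 0 < ν (Set.Ici 0 \ C) ∧ (∀ θ ∈ C, P θ Aᶜ = 0) ∧
      (∀ᵐ θ ∂ν, θ ∈ Set.Ici 0 \ C → P θ A = 0) := by
  have hP (θ : ℝ) : P θ = Measure.pi fun _ => uniformScaleLaw θ := by
    rcases lt_or_ge 0 θ with hθ | hθ
    · rw [hPpos θ hθ, uniformScaleLaw.of_pos hθ]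
    · rw [hPzero θ hθ, uniformScaleLaw.of_nonpos hθ]
  have hP_not_singular (θ η : ℝ) : ¬ P θ ⟂ₘ P η := by
    rw [hP θ, hP η]
    exact not_mutuallySingular_pi fun _ => uniformScaleLaw.not_mutuallySingular θ η
  rintro ⟨C, A, ⟨θ₁, hθ₁⟩, hν_pos, hC, hA⟩
  exact hν_pos.ne' <| measure_eq_zero_of_ae_not_mutuallySingular
    (ae_of_all ν fun θ => hP_not_singular θ θ₁) (hC θ₁ hθ₁) hA

/-- Example 2 (case 2): the uniform scale model on `ℝⁿ`, with `P(·|θ)` the law of `n` i.i.d.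
`Uniform[0,θ)` random variables for `θ > 0` and `P(·|0)` (and `θ ≤ 0`) the law of `n` i.i.d.
unit-rate exponentials, together with the prior `ν(dθ) = θ⁻¹ dθ` on `[0, ∞)`. The sets `A`
and `C` of Theorem 4 do not exist. -/
theorem stmt_16 (n : ℕ) (hn : 0 < n)
    (P : ℝ → Measure (Fin n → ℝ))
    (hPpos : ∀ θ : ℝ, 0 < θ →
      P θ = Measure.pi (fun _ : Fin n =>
        (ENNReal.ofReal θ)⁻¹ • (volume.restrict (Set.Ico 0 θ))))
    (hPzero : ∀ θ : ℝ, θ ≤ 0 →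
      P θ = Measure.pi (fun _ : Fin n => expMeasure 1))
    (ν : Measure ℝ)
    (hν : ν = (volume.restrict (Set.Ici (0 : ℝ))).withDensity
      (fun θ => ENNReal.ofReal θ⁻¹)) :
    ¬ ∃ (C : Set ℝ) (A : Set (Fin n → ℝ)),
      MeasurableSet C ∧ C.Nonempty ∧ C ⊆ Set.Ici 0 ∧ 0 < ν (Set.Ici 0 \ C) ∧
      MeasurableSet A ∧
      (∀ θ ∈ C, P θ Aᶜ = 0) ∧
      (∀ᵐ θ ∂ν, θ ∈ Set.Ici 0 \ C → P θ A = 0) := by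
  rintro ⟨C, A, -, hC_ne, -, hν_pos, -, hC, hA⟩
  exact stmt_16_general P hPpos hPzero ν ⟨C, A, hC_ne, hν_pos, hC, hA⟩
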